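/- For all m, n with 3 ≤ m, n ≤ ω, the class of (m,n)-representable posets is not finitely axiomatizable: there is no sentence φ of the first-order language with a single binary relation symbol ≤ such that for every poset P, P satisfies φ if and only if P is (m,n)-representable. -/

import Mathlib

/-!
The obstruction to representability used here is the failure of 2-colourability of an odd cycle.

To a commutative ring `V`, regarded as a graph with edges `{v, v + 1}`, attach the poset `Elt V`
with elements `lo v`, `mid v`, `hi v` (for `v : V`) and two further elements `ax true`, `ax false`,
such that `mid v ⊔ mid (v + 1) = hi v`, `mid v ⊓ mid (v + 1) = lo v`, and both `ax c` lie above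
every `lo v`, below every `hi v`, and are incomparable to each other and to every `mid v`.
When `1` and `2` are nonzero, these are the only joins and meets of `Elt V` that are not attained
in the set itself, whatever the size of the set (`isLUB_cases`, `isGLB_cases`). A point `x` of a
representation determines a prime up-set, the set of elements whose image contains `x`. If it
contains one `ax c` but not the other, it contains every `hi v` and no `lo v`, hence
exactly one of `mid v`, `mid (v + 1)` for each `v`: it is a proper 2-colouring of the graph.

* For `V = ZMod (2k+3)` the graph is an odd cycle, no colouring exists, the elements `ax true` and
  `ax false` cannot be separated, and `Elt V` is not even `(3,3)`-representable.
* For `V` of characteristic zero the graph is a disjoint union of two-way infinite paths, so a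
  colouring exists. Every other pair of elements is separated by a prime up-set that involves no
  colouring, so `Elt V` is `(m,n)`-representable for all `m` and `n`.

The ultraproduct of the posets `Elt (ZMod (2k+3))` is isomorphic to `Elt V` for `V` the ultraproduct
of the rings `ZMod (2k+3)`, which has characteristic zero. By Łoś's theorem a sentence true in
exactly the representable posets would hold in some `Elt (ZMod (2k+3))`, a contradiction.
-/

open Cardinal

universe u

/-- A field of sets: a collection of subsets of `X` closed under finite unions,
finite intersections, and complements. -/
def IsFieldOfSets {X : Type u} (F : Set (Set X)) : Prop :=
  ∅ ∈ F ∧ Set.univ ∈ F ∧ (∀ A ∈ F, ∀ B ∈ F, A ∪ B ∈ F) ∧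
    (∀ A ∈ F, ∀ B ∈ F, A ∩ B ∈ F) ∧ (∀ A ∈ F, Aᶜ ∈ F)

/-- A poset `P` is `(α,β)`-representable if there is a field of sets `F` and an
injective map `h : P → F` preserving all existing meets of sets of cardinality `< α`
and all existing joins of sets of cardinality `< β`. -/
def IsRepresentable (α β : Cardinal.{u}) (P : Type u) [PartialOrder P] : Prop :=
  ∃ (X : Type u) (F : Set (Set X)) (h : P → Set X),
    IsFieldOfSets F ∧ (∀ p : P, h p ∈ F) ∧ Function.Injective h ∧
    (∀ S : Set P, #S < α → ∀ a : P, IsGLB S a → h a = ⋂ s ∈ S, h s) ∧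
    (∀ T : Set P, #T < β → ∀ a : P, IsLUB T a → h a = ⋃ t ∈ T, h t)

namespace CyclePoset

/-! ### The poset of a cyclic graph -/

/-- The elements of the poset attached to `V`. -/
inductive Elt (V : Type) : Type
  | lo (v : V)
  | mid (v : V)
  | hi (v : V)
  | ax (c : Bool)

open Elt

/-- The order of the poset: each `mid i` lies below exactly `hi i` and `hi (i - 1)` and above exactly
`lo i` and `lo (i - 1)`, and every `lo` and every `hi` are comparable to both `ax`. -/
def Elt.Le {V : Type} [CommRing V] : Elt V → Elt V → Prop
  | lo i, lo k => i = k
  | lo i, mid k => k = i ∨ k = i + 1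
  | lo _, hi _ => True
  | lo _, ax _ => True
  | mid i, mid k => i = k
  | mid i, hi k => i = k ∨ i = k + 1
  | ax c, ax d => c = d
  | ax _, hi _ => True
  | hi i, hi k => i = k
  | _, _ => False

variable {V : Type} [CommRing V]

instance : PartialOrder (Elt V) where
  le := Elt.Le
  le_refl x := by cases x <;> simp [Elt.Le]
  le_trans x y z := by
    cases x <;> cases y <;> cases z <;> simp only [Elt.Le] <;> grind
  le_antisymm x y := by
    cases x <;> cases y <;> simp only [Elt.Le] <;> grind

theorem le_def (x y : Elt V) : x ≤ y ↔ Elt.Le x y := Iff.rfl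

theorem add_one_ne [Nontrivial V] (i : V) : i + 1 ≠ i := by simp

theorem add_two_ne (h2 : (2 : V) ≠ 0) (i : V) : i + 1 + 1 ≠ i := by
  intro h; apply h2; linear_combination h

section Nontrivial

variable [Nontrivial V]

theorem isLUB_hi (h2 : (2 : V) ≠ 0) (i : V) :
    IsLUB ({mid i, mid (i + 1)} : Set (Elt V)) (hi i) := by
  have h1 := add_one_ne (V := V)
  have h2 := add_two_ne h2
  constructor
  · rintro x (rfl | rfl) <;> simp [le_def, Elt.Le]
  · intro x hx
    have ha := hx (Set.mem_insert _ _)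
    have hb := hx (Set.mem_insert_of_mem _ rfl)
    cases x <;> simp only [le_def, Elt.Le] at ha hb ⊢ <;> grind

theorem isGLB_lo (h2 : (2 : V) ≠ 0) (i : V) :
    IsGLB ({mid i, mid (i + 1)} : Set (Elt V)) (lo i) := by
  have h1 := add_one_ne (V := V)
  have h2 := add_two_ne h2
  constructor
  · rintro x (rfl | rfl) <;> simp [le_def, Elt.Le]
  · intro x hx
    have ha := hx (Set.mem_insert _ _)
    have hb := hx (Set.mem_insert_of_mem _ rfl)
    cases x <;> simp only [le_def, Elt.Le] at ha hb ⊢ <;> grind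

/-- A join that is not attained is one of the joins `mid i ⊔ mid (i + 1) = hi i`: otherwise some element
not above `a` still bounds every element of `T`. -/
theorem isLUB_cases {T : Set (Elt V)} {a : Elt V} (h : IsLUB T a) :
    a ∈ T ∨ ∃ i, a = hi i ∧ mid i ∈ T ∧ mid (i + 1) ∈ T := by
  have h1 := add_one_ne (V := V)
  by_contra! hcon
  obtain ⟨haT, hT⟩ := hcon
  -- As `a ∉ T`, anything bounding the elements strictly below `a` bounds `T`.
  have key : ∀ y : Elt V, (∀ x ∈ T, x ≤ a → x ≠ a → x ≤ y) → a ≤ y := fun y hy =>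
    h.2 fun x hx => hy x hx (h.1 hx) (fun e => haT (e ▸ hx))
  cases a with
  | lo i =>
    have := key (lo (i + 1)) (by
      intro x _; cases x <;> simp only [le_def, Elt.Le] <;> grind)
    simp [le_def, Elt.Le] at this
  | mid i =>
    have := key (ax true) (by
      intro x _; cases x <;> simp only [le_def, Elt.Le] <;> grind)
    simp [le_def, Elt.Le] at this
  | ax c =>
    have := key (ax !c) (by
      intro x _; cases x <;> simp only [le_def, Elt.Le] <;> grind)
    simp [le_def, Elt.Le] at this
  | hi i =>
    by_cases hi' : mid i ∈ T
    · have := key (hi (i - 1)) (by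
        have := hT i rfl hi'
        intro x _; cases x <;> simp only [le_def, Elt.Le] <;> grind)
      simp only [le_def, Elt.Le] at this
      grind
    · have := key (hi (i + 1)) (by
        intro x _; cases x <;> simp only [le_def, Elt.Le] <;> grind)
      simp [le_def, Elt.Le] at this

/-- The dual of `isLUB_cases`. -/
theorem isGLB_cases {T : Set (Elt V)} {a : Elt V} (h : IsGLB T a) :
    a ∈ T ∨ ∃ i, a = lo i ∧ mid i ∈ T ∧ mid (i + 1) ∈ T := by
  have h1 := add_one_ne (V := V)
  by_contra! hcon
  obtain ⟨haT, hT⟩ := hcon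
  have key : ∀ y : Elt V, (∀ x ∈ T, a ≤ x → x ≠ a → y ≤ x) → y ≤ a := fun y hy =>
    h.2 fun x hx => hy x hx (h.1 hx) (fun e => haT (e ▸ hx))
  cases a with
  | hi i =>
    have := key (hi (i + 1)) (by
      intro x _; cases x <;> simp only [le_def, Elt.Le] <;> grind)
    simp [le_def, Elt.Le] at this
  | mid i =>
    have := key (ax true) (by
      intro x _; cases x <;> simp only [le_def, Elt.Le] <;> grind)
    simp [le_def, Elt.Le] at this
  | ax c =>
    have := key (ax !c) (by
      intro x _; cases x <;> simp only [le_def, Elt.Le] <;> grind)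
    simp [le_def, Elt.Le] at this
  | lo i =>
    by_cases hi' : mid i ∈ T
    · have := key (lo (i - 1)) (by
        have := hT i rfl hi'
        intro x _; cases x <;> simp only [le_def, Elt.Le] <;> grind)
      simp only [le_def, Elt.Le] at this
      grind
    · have := key (lo (i + 1)) (by
        intro x _; cases x <;> simp only [le_def, Elt.Le] <;> grind)
      simp [le_def, Elt.Le] at this

end Nontrivial

/-! ### Prime up-sets and representability -/

/-- An up-set respecting the nontrivial joins and meets. By `isLUB_cases` and `isGLB_cases` it respects
all existing joins and meets. -/
structure IsPrime (Γ : Set (Elt V)) : Prop where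
  upper : IsUpperSet Γ
  join : ∀ i, hi i ∈ Γ → mid i ∈ Γ ∨ mid (i + 1) ∈ Γ
  meet : ∀ i, mid i ∈ Γ → mid (i + 1) ∈ Γ → lo i ∈ Γ

/-- The points of the representation are the prime up-sets. -/
theorem isRepresentable_of_separated [Nontrivial V] (m n : Cardinal.{0})
    (hsep : ∀ x y : Elt V, x ≠ y → ∃ Γ : Set (Elt V), IsPrime Γ ∧ ¬(x ∈ Γ ↔ y ∈ Γ)) :
    IsRepresentable m n (Elt V) := by
  refine ⟨{Γ : Set (Elt V) // IsPrime Γ}, Set.univ, fun p => {Γ | p ∈ Γ.1}, ?_, ?_, ?_, ?_, ?_⟩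
  · simp [IsFieldOfSets]
  · simp
  · intro x y hxy
    by_contra hne
    obtain ⟨Γ, hΓ, h⟩ := hsep x y hne
    exact h (Set.ext_iff.1 hxy ⟨Γ, hΓ⟩)
  · intro S _ a ha
    ext ⟨Γ, hΓ⟩
    simp only [Set.mem_ofPred_eq, Set.mem_iInter]
    refine ⟨fun h s hs => hΓ.upper (ha.1 hs) h, fun h => ?_⟩
    rcases isGLB_cases ha with h' | ⟨i, rfl, hi, hi'⟩
    · exact h _ h'
    · exact hΓ.meet i (h _ hi) (h _ hi')
  · intro T _ a ha
    ext ⟨Γ, hΓ⟩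
    simp only [Set.mem_ofPred_eq, Set.mem_iUnion]
    refine ⟨fun h => ?_, fun ⟨t, ht, h⟩ => hΓ.upper (ha.1 ht) h⟩
    rcases isLUB_cases ha with h' | ⟨i, rfl, hi, hi'⟩
    · exact ⟨_, h', h⟩
    · rcases hΓ.join i h with h | h
      exacts [⟨_, hi, h⟩, ⟨_, hi', h⟩]

/-- The up-set generated by `mid v`. -/
def starSet (v : V) : Set (Elt V) := {mid v, hi v, hi (v - 1)}

/-- The complement of the down-set generated by `mid v`. -/
def costarSet (v : V) : Set (Elt V) := {mid v, lo v, lo (v - 1)}ᶜ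

/-- The up-set of a set `c` of vertices: all `hi`, no `lo`, one `ax`, and `mid i` for `i` in `c`. -/
def colorSet (c : V → Prop) (d : Bool) : Set (Elt V) :=
  {x | match x with
    | lo _ => False
    | mid i => c i
    | hi _ => True
    | ax e => e = d}

theorem starSet_isPrime [Nontrivial V] (v : V) : IsPrime (starSet v) := by
  have h1 := add_one_ne (V := V)
  constructor
  · intro x y
    cases x <;> cases y <;> simp [starSet, le_def, Elt.Le] <;> grind
  · intro i; simp [starSet]; grind
  · intro i; simp [starSet]; grind

theorem costarSet_isPrime [Nontrivial V] (v : V) : IsPrime (costarSet v) := by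
  have h1 := add_one_ne (V := V)
  constructor
  · intro x y
    cases x <;> cases y <;> simp [costarSet, le_def, Elt.Le] <;> grind
  · intro i; simp [costarSet]; grind
  · intro i; simp [costarSet]; grind

theorem colorSet_isPrime (c : V → Prop) (hc : ∀ v, c (v + 1) ↔ ¬ c v) (d : Bool) :
    IsPrime (colorSet c d) := by
  constructor
  · intro x y
    cases x <;> cases y <;> simp [colorSet, le_def, Elt.Le] <;> grind
  · intro i; simp [colorSet, hc]; grind
  · intro i; simp [colorSet, hc]

/-- Only the pair `ax true`, `ax false` needs the colouring; all other pairs are separated by the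
up-set or by the complement of the down-set of a single `mid v`. -/
theorem isRepresentable_of_coloring [Nontrivial V] (m n : Cardinal.{0}) (h2 : (2 : V) ≠ 0)
    (c : V → Prop) (hc : ∀ v, c (v + 1) ↔ ¬ c v) : IsRepresentable m n (Elt V) := by
  have h1 := add_one_ne (V := V)
  have h2 := add_two_ne h2
  apply isRepresentable_of_separated
  have s := starSet_isPrime (V := V)
  have t := costarSet_isPrime (V := V)
  have k := colorSet_isPrime c hc
  -- Both `i = k - 1` and `k = i - 1` would give `2 = 0`.
  have pair : ∀ i k : V, i ≠ k → i ≠ k - 1 ∨ k ≠ i - 1 := by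
    intro i k _
    by_contra! h
    exact h2 i (by grind)
  intro x y hxy
  cases x with
  | lo i =>
    cases y with
    | lo k =>
      rcases pair i k (by grind) with h | h
      · exact ⟨_, t k, by simp [costarSet]; grind⟩
      · exact ⟨_, t i, by simp [costarSet]; grind⟩
    | mid k => exact ⟨_, s k, by simp [starSet]⟩
    | hi k => exact ⟨_, s k, by simp [starSet]⟩
    | ax d => exact ⟨_, t i, by simp [costarSet]⟩
  | mid i =>
    cases y with
    | lo k => exact ⟨_, s i, by simp [starSet]⟩
    | mid k => exact ⟨_, s k, by simp [starSet]; grind⟩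
    | hi k => exact ⟨_, t i, by simp [costarSet]⟩
    | ax d => exact ⟨_, s i, by simp [starSet]⟩
  | hi i =>
    cases y with
    | hi k =>
      rcases pair i k (by grind) with h | h
      · exact ⟨_, s k, by simp [starSet]; grind⟩
      · exact ⟨_, s i, by simp [starSet]; grind⟩
    | mid k => exact ⟨_, t k, by simp [costarSet]⟩
    | lo k => exact ⟨_, s i, by simp [starSet]⟩
    | ax d => exact ⟨_, s i, by simp [starSet]⟩
  | ax d =>
    cases y with
    | lo k => exact ⟨_, t k, by simp [costarSet]⟩
    | mid k => exact ⟨_, s k, by simp [starSet]⟩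
    | hi k => exact ⟨_, s k, by simp [starSet]⟩
    | ax e => exact ⟨_, k d, by simp [colorSet]; grind⟩

/-- Each coset of `ℤ` in `V` is coloured by the parity of the distance to a chosen representative. -/
theorem exists_coloring [CharZero V] : ∃ c : V → Prop, ∀ v, c (v + 1) ↔ ¬ c v := by
  let Z := AddSubgroup.zmultiples (1 : V)
  let r : V → V := fun v => (QuotientAddGroup.mk (s := Z) v).out
  have hr1 : ∀ v, r (v + 1) = r v := by
    intro v
    have : (QuotientAddGroup.mk (s := Z) (v + 1)) = QuotientAddGroup.mk (s := Z) v := by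
      rw [QuotientAddGroup.eq]
      refine ⟨-1, by simp⟩
    simp only [r, this]
  have hr : ∀ v, ∃ w : ℤ, v = r v + w := by
    intro v
    have : QuotientAddGroup.mk (s := Z) (r v) = QuotientAddGroup.mk (s := Z) v :=
      Quotient.out_eq _
    rw [QuotientAddGroup.eq] at this
    obtain ⟨w, hw⟩ := this
    refine ⟨w, ?_⟩
    simp only [zsmul_eq_mul, mul_one] at hw
    rw [hw]; ring
  refine ⟨fun v => ∃ w : ℤ, Even w ∧ v = r v + w, fun v => ?_⟩
  obtain ⟨w, hw⟩ := hr v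
  have huniq : ∀ w' : ℤ, v = r v + w' → w' = w := by
    intro w' h
    have : (w' : V) = w := by linear_combination hw - h
    exact_mod_cast this
  beta_reduce
  rw [hr1]
  constructor
  · rintro ⟨a, ha, ha'⟩ ⟨b, hb, hb'⟩
    have := huniq b hb'
    have := huniq (a - 1) (by push_cast; linear_combination ha')
    grind
  · intro h
    refine ⟨w + 1, ?_, by push_cast; linear_combination hw⟩
    rcases Int.even_or_odd w with h' | h'
    · exact absurd ⟨w, h', hw⟩ h
    · grind

/-! ### Odd cycles -/

/-- A representation point separating `ax true` from `ax false` would 2-colour an odd cycle. -/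
theorem not_isRepresentable_zmod (m n : Cardinal.{0}) (hm3 : 3 ≤ m) (hn3 : 3 ≤ n) (k : ℕ) :
    ¬ IsRepresentable m n (Elt (ZMod (2 * k + 3))) := by
  have : Fact (1 < 2 * k + 3) := ⟨by omega⟩
  have h2 : (2 : ZMod (2 * k + 3)) ≠ 0 := by
    intro h
    have := (ZMod.natCast_eq_zero_iff 2 (2 * k + 3)).1 (by exact_mod_cast h)
    have := Nat.le_of_dvd (by norm_num) this
    omega
  have hcard : ∀ x y : Elt (ZMod (2 * k + 3)), #({x, y} : Set _) < 3 := by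
    intro x y
    calc #({x, y} : Set _) ≤ #({y} : Set (Elt (ZMod (2 * k + 3)))) + 1 := mk_insert_le
      _ < 3 := by rw [mk_singleton]; norm_num
  rintro ⟨X, F, h, -, -, hinj, hmeet, hjoin⟩
  have meet : ∀ a b d, IsGLB {a, b} d → h d = h a ∩ h b := fun a b d hd => by
    simpa using hmeet _ ((hcard a b).trans_le hm3) d hd
  have join : ∀ a b d, IsLUB {a, b} d → h d = h a ∪ h b := fun a b d hd => by
    simpa using hjoin _ ((hcard a b).trans_le hn3) d hd
  -- Monotonicity comes from the meet `a ⊓ b = a`.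
  have mono : ∀ a b, a ≤ b → h a ⊆ h b := fun a b hab => by
    rw [meet a b a ⟨by rintro x (rfl | rfl) <;> simp [hab], fun x hx => hx (by simp)⟩]
    exact Set.inter_subset_right
  have key : ∀ c d : Bool, h (ax c) ⊆ h (ax d) := by
    intro c d x hx
    by_contra hx'
    have color : ∀ i, x ∈ h (mid (i + 1)) ↔ ¬ x ∈ h (mid i) := by
      intro i
      have a1 : x ∈ h (hi i) := mono _ _ (by simp [le_def, Elt.Le]) hx
      have a2 : x ∉ h (lo i) := fun hl => hx' (mono _ _ (by simp [le_def, Elt.Le]) hl)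
      rw [join _ _ _ (isLUB_hi h2 i)] at a1
      rw [meet _ _ _ (isGLB_lo h2 i)] at a2
      simp only [Set.mem_union, Set.mem_inter_iff] at a1 a2
      tauto
    have iter : ∀ l : ℕ, x ∈ h (mid (l : ZMod (2 * k + 3))) ↔ (Even l ↔ x ∈ h (mid 0)) := by
      intro l
      induction l with
      | zero => simp
      | succ l ih =>
        rw [Nat.cast_succ, color, ih, Nat.even_add_one]
        tauto
    have := iter (2 * k + 3)
    rw [ZMod.natCast_self] at this
    have : ¬ Even (2 * k + 3) := by grind
    tauto
  have := hinj ((key true false).antisymm (key false true))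
  simp at this

/-! ### The ultraproduct -/

/-- A nonprincipal ultrafilter on `ℕ`. -/
noncomputable def U : Ultrafilter ℕ := Filter.hyperfilter ℕ

/-- The ideal of sequences vanishing `U`-almost everywhere. -/
def nullIdeal : Ideal (∀ k : ℕ, ZMod (2 * k + 3)) where
  carrier := {f | ∀ᶠ k in (U : Filter ℕ), f k = 0}
  add_mem' ha hb := by
    filter_upwards [ha, hb] with k h1 h2
    simp [h1, h2]
  zero_mem' := by simp
  smul_mem' c f hf := by
    filter_upwards [hf] with k h
    simp [h]

/-- The ultraproduct of the odd cycles `ZMod (2k+3)`, as a quotient ring. -/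
abbrev HyperCycle : Type := (∀ k : ℕ, ZMod (2 * k + 3)) ⧸ nullIdeal

theorem mk_eq_iff (f g : ∀ k : ℕ, ZMod (2 * k + 3)) :
    (Ideal.Quotient.mk nullIdeal f = Ideal.Quotient.mk nullIdeal g) ↔
      ∀ᶠ k in (U : Filter ℕ), f k = g k := by
  rw [Ideal.Quotient.eq]
  show (∀ᶠ k in (U : Filter ℕ), (f - g) k = 0) ↔ _
  simp [sub_eq_zero]

instance : CharZero HyperCycle := by
  apply charZero_of_inj_zero
  intro n hn
  rw [← map_natCast (Ideal.Quotient.mk nullIdeal), ← map_zero (Ideal.Quotient.mk nullIdeal),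
    mk_eq_iff] at hn
  have hge : ∀ᶠ k in (U : Filter ℕ), n ≤ k :=
    Nat.hyperfilter_le_atTop (Filter.eventually_ge_atTop n)
  obtain ⟨k, h1, h2⟩ := (hn.and hge).exists
  by_contra h0
  have := (ZMod.natCast_eq_zero_iff n (2 * k + 3)).1 h1
  have := Nat.le_of_dvd (Nat.pos_of_ne_zero h0) this
  omega

theorem isRepresentable_hyperCycle (m n : Cardinal.{0}) :
    IsRepresentable m n (Elt HyperCycle) := by
  obtain ⟨c, hc⟩ := exists_coloring (V := HyperCycle)
  exact isRepresentable_of_coloring m n two_ne_zero c hc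

/-- A sequence representing an element of the ultraproduct. -/
noncomputable def rep (v : HyperCycle) : ∀ k : ℕ, ZMod (2 * k + 3) := Quotient.out v

theorem mk_rep (v : HyperCycle) : Ideal.Quotient.mk nullIdeal (rep v) = v := Quotient.out_eq v

theorem rep_eq_iff (v w : HyperCycle) :
    (∀ᶠ k in (U : Filter ℕ), rep v k = rep w k) ↔ v = w := by
  rw [← mk_eq_iff, mk_rep, mk_rep]

theorem rep_eq_add_one_iff (v w : HyperCycle) :
    (∀ᶠ k in (U : Filter ℕ), rep v k = rep w k + 1) ↔ v = w + 1 := by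
  refine (mk_eq_iff (rep v) (rep w + 1)).symm.trans ?_
  rw [map_add, map_one, mk_rep, mk_rep]

/-- A sequence of elements of the posets `Elt (ZMod (2k+3))` representing an element of
`Elt HyperCycle`. -/
noncomputable def liftFun : Elt HyperCycle → ∀ k : ℕ, Elt (ZMod (2 * k + 3))
  | lo v => fun k => lo (rep v k)
  | mid v => fun k => mid (rep v k)
  | hi v => fun k => hi (rep v k)
  | ax c => fun _ => ax c

theorem lift_le_iff (x y : Elt HyperCycle) :
    (∀ᶠ k in (U : Filter ℕ), liftFun x k ≤ liftFun y k) ↔ x ≤ y := by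
  cases x <;> cases y <;>
    simp [liftFun, le_def, Elt.Le, U.neBot.ne, Ultrafilter.eventually_or, rep_eq_iff, rep_eq_add_one_iff]

/-- An ultrafilter decides which of the finitely many kinds of elements a sequence consists of. -/
theorem exists_lift (f : ∀ k : ℕ, Elt (ZMod (2 * k + 3))) :
    ∃ x, ∀ᶠ k in (U : Filter ℕ), liftFun x k = f k := by
  have hcase : ∀ᶠ k in (U : Filter ℕ), (∃ v, lo v = f k) ∨ (∃ v, mid v = f k) ∨
      (∃ v, hi v = f k) ∨ ax true = f k ∨ ax false = f k := by
    filter_upwards with k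
    rcases f k with v | v | v | (_ | _) <;> simp
  have hrep : ∀ g : ∀ k : ℕ, ZMod (2 * k + 3), ∀ᶠ k in (U : Filter ℕ),
      rep (Ideal.Quotient.mk nullIdeal g) k = g k := fun g => by rw [← mk_eq_iff, mk_rep]
  have hchoose : ∀ C : ∀ k : ℕ, ZMod (2 * k + 3) → Elt (ZMod (2 * k + 3)),
      (∀ᶠ k in (U : Filter ℕ), ∃ v, C k v = f k) →
      ∃ w : HyperCycle, ∀ᶠ k in (U : Filter ℕ), C k (rep w k) = f k := by
    intro C hC
    obtain ⟨g, hg⟩ : ∃ g : ∀ k : ℕ, ZMod (2 * k + 3), ∀ k, (∃ v, C k v = f k) → C k (g k) = f k :=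
      ⟨fun k => Classical.epsilon fun v => C k v = f k, fun _ h => Classical.epsilon_spec h⟩
    refine ⟨Ideal.Quotient.mk nullIdeal g, ?_⟩
    filter_upwards [hC, hrep g] with k h1 h2
    rw [h2]
    exact hg k h1
  simp only [Ultrafilter.eventually_or] at hcase
  rcases hcase with h | h | h | h | h
  · obtain ⟨w, hw⟩ := hchoose (fun _ => lo) h
    exact ⟨lo w, hw⟩
  · obtain ⟨w, hw⟩ := hchoose (fun _ => mid) h
    exact ⟨mid w, hw⟩
  · obtain ⟨w, hw⟩ := hchoose (fun _ => hi) h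
    exact ⟨hi w, hw⟩
  · exact ⟨ax true, h⟩
  · exact ⟨ax false, h⟩

open FirstOrder

attribute [local instance] Language.orderStructure

/-- The construction `Elt` commutes with the ultraproduct. -/
noncomputable def liftEquiv :
    Elt HyperCycle ≃[Language.order]
      (U : Filter ℕ).Product (fun k => Elt (ZMod (2 * k + 3))) where
  toEquiv := Equiv.ofBijective (fun x => Quotient.mk _ (liftFun x)) <| by
    constructor
    · intro x y hxy
      have h : ∀ᶠ k in (U : Filter ℕ), liftFun x k = liftFun y k := Quotient.exact hxy
      exact le_antisymm ((lift_le_iff x y).1 (h.mono fun _ h => h.le))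
        ((lift_le_iff y x).1 (h.mono fun _ h => h.ge))
    · intro q
      induction q using Quotient.inductionOn with
      | h f =>
        obtain ⟨x, hx⟩ := exists_lift f
        exact ⟨x, Quotient.sound hx⟩
  map_fun' f := nomatch f
  map_rel' r x := by
    cases r
    refine (Language.relMap_quotient_mk' _ _ (fun i => liftFun (x i))).trans ?_
    exact lift_le_iff (x 0) (x 1)

theorem realize_hyperCycle_iff (φ : Language.order.Sentence) :
    Elt HyperCycle ⊨ φ ↔ ∀ᶠ k in (U : Filter ℕ), Elt (ZMod (2 * k + 3)) ⊨ φ := by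
  have : ∀ k : ℕ, Nonempty (Elt (ZMod (2 * k + 3))) := fun _ => ⟨ax true⟩
  rw [← Language.Ultraproduct.sentence_realize]
  exact Language.StrongHomClass.realize_sentence liftEquiv φ

end CyclePoset

open FirstOrder in
/-- For all cardinals `m, n` with `3 ≤ m, n ≤ ω`, the class of
`(m,n)`-representable posets is not finitely axiomatizable: no single first-order sentence
in the language of a binary relation `≤` holds in exactly the `(m,n)`-representable
posets. -/
theorem statement17 (m n : Cardinal.{0}) (hm3 : 3 ≤ m) (hmω : m ≤ ℵ₀)
    (hn3 : 3 ≤ n) (hnω : n ≤ ℵ₀) :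
    ¬∃ φ : Language.order.Sentence,
      ∀ (P : Type) [PartialOrder P],
        (letI := Language.orderStructure P; P ⊨ φ) ↔ IsRepresentable m n P := by
  rintro ⟨φ, hφ⟩
  have h := (CyclePoset.realize_hyperCycle_iff φ).1
    ((hφ _).2 (CyclePoset.isRepresentable_hyperCycle m n))
  obtain ⟨k, hk⟩ := h.exists
  exact CyclePoset.not_isRepresentable_zmod m n hm3 hn3 k ((hφ _).1 hk)
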